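/- arXiv:2603.13491 — 5 statements merged into one kernel-verified Lean document; each statement's English description precedes it below -/
import Mathlib

section
/- Let p and s be real numbers with s ≥ p ≥ 2 and let h : ℝ^d → ℝ be defined by h(z) = ‖z‖_p^s. Then for all z_a, z_b ∈ ℝ^d, ⟨∇h(z_a) − ∇h(z_b), z_a − z_b⟩ ≥ (4s/2^s)·‖z_a − z_b‖_p^s. Equivalently, the symmetrized Bregman divergence of h satisfies ω_h(z_a, z_b) + ω_h(z_b, z_a) ≥ (4s/2^s)·‖z_a − z_b‖_p^s. -/
open RealInnerProductSpace

/-- The ℓ_p norm on ℝ^d : `‖z‖_p = (Σ_i |z_i|^p)^(1/p)`. -/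
noncomputable def lpnorm {d : ℕ} (p : ℝ) (z : EuclideanSpace ℝ (Fin d)) : ℝ :=
  (∑ i, |z i| ^ p) ^ (1 / p)

/-!
Writing `J z = (|zᵢ|^(p-2) zᵢ)ᵢ`, the gradient of `‖z‖_p^s` is `s ‖z‖_p^(s-p) J z`. For `s = p` the
bound holds coordinate by coordinate. For larger `s` and `x ≠ y`, put `A = ‖x‖_p`, `B = ‖y‖_p`,
`V = ‖x - y‖_p`, `u = ⟪J x, x - y⟫ / V` and `w = ⟪J y, y - x⟫ / V`. Hölder's inequality gives
`u ≤ A^(p-1)` and `w ≤ B^(p-1)`, the case `s = p` gives `u + w ≥ 2 (V/2)^(p-1)`, and the goal is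
`A^(s-p) u + B^(s-p) w ≥ 2 (V/2)^(s-1)`. If `u` and `w` are nonnegative, the Hölder bounds reduce it
to the convexity of `t ↦ t^((s-1)/(p-1))`. If, say, `w < 0`, then Hölder forces `B ≤ A`, so the
left side is at least `A^(s-p) (u + w)`, where `A^(p-1) ≥ u ≥ u + w` gives `A ≥ V/2`.
-/

section ScalarInequalities

theorem two_mul_half_add_rpow_le {r x y : ℝ} (hr : 1 ≤ r) (hx : 0 ≤ x) (hy : 0 ≤ y) :
    2 * ((x + y) / 2) ^ r ≤ x ^ r + y ^ r := by
  have h := (convexOn_rpow hr).2 hx hy one_half_pos.le one_half_pos.le (add_halves 1)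
  simp only [smul_eq_mul, one_div_mul_eq_div, ← add_div] at h
  linarith

theorem two_mul_half_sub_rpow_le {r x y : ℝ} (hr : 1 ≤ r) (hy : 0 ≤ y) (hyx : y ≤ x) :
    2 * ((x - y) / 2) ^ r ≤ x ^ r - y ^ r := by
  have hsub : 0 ≤ x - y := sub_nonneg.2 hyx
  have hhalf_nonneg : 0 ≤ (x - y) / 2 := by positivity
  have hhalf : ((x - y) / 2) ^ r + ((x - y) / 2) ^ r ≤ (x - y) ^ r := by
    simpa using Real.add_rpow_le_rpow_add hhalf_nonneg hhalf_nonneg hr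
  have hsuper : (x - y) ^ r + y ^ r ≤ x ^ r := by
    simpa using Real.add_rpow_le_rpow_add hsub hy hr
  linarith

theorem four_div_two_rpow_mul_rpow {p t : ℝ} (hp : p ≠ 0) (ht : 0 ≤ t) :
    4 / 2 ^ p * t ^ p = 2 * (t / 2) ^ (p - 1) * t := by
  have hsplit : ((t / 2) ^ p : ℝ) = (t / 2) ^ (p - 1) * (t / 2) := by
    rw [← Real.rpow_add_one' (by positivity) (by simpa), sub_add_cancel]
  rw [div_mul_eq_mul_div, mul_div_assoc, ← Real.div_rpow ht zero_le_two, hsplit]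
  ring

theorem rpow_div_mul_self_le {q r a u : ℝ} (hr : 0 < r) (hq : 0 ≤ q) (ha : 0 ≤ a) (hu : 0 ≤ u)
    (hua : u ≤ a ^ r) : u ^ ((r + q) / r) ≤ a ^ q * u := by
  have hroot : u ^ (q / r) ≤ a ^ q := by
    calc u ^ (q / r) ≤ (a ^ r) ^ (q / r) := by gcongr
      _ = a ^ q := by rw [← Real.rpow_mul ha, mul_div_cancel₀ _ hr.ne']
  calc u ^ ((r + q) / r) = u ^ (q / r) * u := by
        rw [add_div, div_self hr.ne', add_comm, Real.rpow_add_one' hu (by positivity)]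
    _ ≤ a ^ q * u := by gcongr

theorem two_mul_rpow_add_le_of_nonneg {q r a b c u w : ℝ} (hr : 0 < r) (hq : 0 ≤ q)
    (ha : 0 ≤ a) (hb : 0 ≤ b) (hc : 0 ≤ c) (hu : 0 ≤ u) (hw : 0 ≤ w)
    (hua : u ≤ a ^ r) (hwb : w ≤ b ^ r) (huw : 2 * c ^ r ≤ u + w) :
    2 * c ^ (r + q) ≤ a ^ q * u + b ^ q * w := by
  have hexp : 1 ≤ (r + q) / r := (one_le_div hr).2 (by linarith)
  calc 2 * c ^ (r + q) = 2 * (c ^ r) ^ ((r + q) / r) := by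
        rw [← Real.rpow_mul hc, mul_div_cancel₀ _ hr.ne']
    _ ≤ 2 * ((u + w) / 2) ^ ((r + q) / r) := by gcongr; linarith
    _ ≤ u ^ ((r + q) / r) + w ^ ((r + q) / r) := two_mul_half_add_rpow_le hexp hu hw
    _ ≤ a ^ q * u + b ^ q * w :=
        add_le_add (rpow_div_mul_self_le hr hq ha hu hua) (rpow_div_mul_self_le hr hq hb hw hwb)

theorem two_mul_rpow_add_le_of_nonpos {q r a b c u w : ℝ} (hr : 0 < r) (hq : 0 ≤ q)
    (ha : 0 ≤ a) (hb : 0 ≤ b) (hc : 0 ≤ c) (hw : w ≤ 0) (hba : b ≤ a)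
    (hua : u ≤ a ^ r) (huw : 2 * c ^ r ≤ u + w) :
    2 * c ^ (r + q) ≤ a ^ q * u + b ^ q * w := by
  have hcr : 0 ≤ c ^ r := by positivity
  have hca : c ≤ a := (Real.rpow_le_rpow_iff hc ha hr).1 (by linarith)
  calc 2 * c ^ (r + q) = c ^ q * (2 * c ^ r) := by
        rw [Real.rpow_add_of_nonneg hc hr.le hq]; ring
    _ ≤ a ^ q * (u + w) := by gcongr
    _ = a ^ q * u + a ^ q * w := mul_add _ _ _
    _ ≤ a ^ q * u + b ^ q * w :=
        add_le_add_right (mul_le_mul_of_nonpos_right (by gcongr) hw) _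

theorem two_mul_rpow_add_le {q r a b c u w : ℝ} (hr : 0 < r) (hq : 0 ≤ q)
    (ha : 0 ≤ a) (hb : 0 ≤ b) (hc : 0 ≤ c) (hua : u ≤ a ^ r) (hwb : w ≤ b ^ r)
    (huw : 2 * c ^ r ≤ u + w) (hab : u ≤ 0 → a ≤ b) (hba : w ≤ 0 → b ≤ a) :
    2 * c ^ (r + q) ≤ a ^ q * u + b ^ q * w := by
  rcases le_total w 0 with hw | hw
  · exact two_mul_rpow_add_le_of_nonpos hr hq ha hb hc hw (hba hw) hua huw
  rcases le_total u 0 with hu | hu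
  · rw [add_comm u] at huw
    rw [add_comm (a ^ q * u)]
    exact two_mul_rpow_add_le_of_nonpos hr hq hb ha hc hu (hab hu) hwb huw
  · exact two_mul_rpow_add_le_of_nonneg hr hq ha hb hc hu hw hua hwb huw

theorem four_div_two_rpow_mul_rpow_le {p s A B V P Q : ℝ} (hp : 1 < p) (hps : p ≤ s)
    (hA : 0 ≤ A) (hB : 0 ≤ B) (hV : 0 ≤ V) (hPA : P ≤ A ^ (p - 1) * V) (hQB : Q ≤ B ^ (p - 1) * V)
    (hPQ : 4 / 2 ^ p * V ^ p ≤ P + Q) (hAB : P ≤ 0 → A ≤ B) (hBA : Q ≤ 0 → B ≤ A) :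
    4 / 2 ^ s * V ^ s ≤ A ^ (s - p) * P + B ^ (s - p) * Q := by
  have hp0 : p ≠ 0 := by positivity
  have hs0 : s ≠ 0 := by linarith
  obtain rfl | hV_pos := hV.eq_or_lt
  · simp only [mul_zero, Real.zero_rpow hp0] at hPA hQB hPQ
    have hP : P = 0 := by linarith
    have hQ : Q = 0 := by linarith
    simp [hP, hQ, Real.zero_rpow hs0]
  have hPQ_div : 2 * (V / 2) ^ (p - 1) ≤ P / V + Q / V := by
    rwa [← add_div, le_div_iff₀ hV_pos, ← four_div_two_rpow_mul_rpow hp0 hV]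
  have hscaled : 2 * (V / 2) ^ (p - 1 + (s - p)) ≤ A ^ (s - p) * (P / V) + B ^ (s - p) * (Q / V) :=
    two_mul_rpow_add_le (sub_pos.2 hp) (sub_nonneg.2 hps) hA hB (by positivity)
      ((div_le_iff₀ hV_pos).2 hPA) ((div_le_iff₀ hV_pos).2 hQB) hPQ_div
      (fun h ↦ hAB (by simpa [div_le_iff₀ hV_pos] using h))
      (fun h ↦ hBA (by simpa [div_le_iff₀ hV_pos] using h))
  calc 4 / 2 ^ s * V ^ s = 2 * (V / 2) ^ (p - 1 + (s - p)) * V := by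
        rw [four_div_two_rpow_mul_rpow hs0 hV, show p - 1 + (s - p) = s - 1 by ring]
    _ ≤ (A ^ (s - p) * (P / V) + B ^ (s - p) * (Q / V)) * V := by gcongr
    _ = A ^ (s - p) * P + B ^ (s - p) * Q := by field_simp

end ScalarInequalities

section SignedPower

variable {r : ℝ}

/-- The odd extension `sign x * |x| ^ r` of the power function `x ^ r` on `[0, ∞)`, written in the
form in which it occurs in the derivative of `|x| ^ (r + 1)`. -/
noncomputable def signedRpow (r x : ℝ) : ℝ := |x| ^ (r - 1) * x

theorem signedRpow_neg (r x : ℝ) : signedRpow r (-x) = -signedRpow r x := by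
  simp [signedRpow]

theorem signedRpow_of_nonneg (hr : r ≠ 0) {x : ℝ} (hx : 0 ≤ x) : signedRpow r x = x ^ r := by
  rw [signedRpow, abs_of_nonneg hx, ← Real.rpow_add_one' hx (by simpa), sub_add_cancel]

theorem abs_signedRpow (hr : r ≠ 0) (x : ℝ) : |signedRpow r x| = |x| ^ r := by
  rw [← signedRpow_of_nonneg hr (abs_nonneg x), signedRpow, signedRpow, abs_mul, abs_abs,
    abs_of_nonneg (by positivity : 0 ≤ |x| ^ (r - 1))]

theorem signedRpow_mul_self (hr : 0 < r) (x : ℝ) : signedRpow r x * x = |x| ^ (r + 1) := by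
  calc signedRpow r x * x = signedRpow r |x| * |x| := by
        simp only [signedRpow, abs_abs, mul_assoc, abs_mul_abs_self]
    _ = |x| ^ (r + 1) := by
        rw [signedRpow_of_nonneg hr.ne' (abs_nonneg x),
          Real.rpow_add_one' (abs_nonneg x) (by positivity)]

theorem two_mul_half_sub_rpow_le_signedRpow_sub (hr : 1 ≤ r) {x y : ℝ} (hyx : y ≤ x) :
    2 * ((x - y) / 2) ^ r ≤ signedRpow r x - signedRpow r y := by
  have hr0 : r ≠ 0 := by positivity
  rcases le_total 0 y with hy | hy
  · rw [signedRpow_of_nonneg hr0 hy, signedRpow_of_nonneg hr0 (hy.trans hyx)]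
    exact two_mul_half_sub_rpow_le hr hy hyx
  have hneg_y : signedRpow r y = -(-y) ^ r := by
    rw [← signedRpow_of_nonneg hr0 (neg_nonneg.2 hy), signedRpow_neg, neg_neg]
  rcases le_total 0 x with hx | hx
  · rw [signedRpow_of_nonneg hr0 hx, hneg_y, sub_neg_eq_add, sub_eq_add_neg]
    exact two_mul_half_add_rpow_le hr hx (neg_nonneg.2 hy)
  · have hneg_x : signedRpow r x = -(-x) ^ r := by
      rw [← signedRpow_of_nonneg hr0 (neg_nonneg.2 hx), signedRpow_neg, neg_neg]
    rw [hneg_x, hneg_y, neg_sub_neg, ← neg_sub_neg y x]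
    exact two_mul_half_sub_rpow_le hr (neg_nonneg.2 hx) (neg_le_neg hyx)

theorem four_div_two_rpow_mul_abs_sub_rpow_le (hr : 1 ≤ r) (x y : ℝ) :
    4 / 2 ^ (r + 1) * |x - y| ^ (r + 1) ≤ (signedRpow r x - signedRpow r y) * (x - y) := by
  wlog hyx : y ≤ x generalizing x y
  · rw [abs_sub_comm, ← neg_mul_neg (_ - _) (_ - _), neg_sub, neg_sub]
    exact this y x (le_of_not_ge hyx)
  have hsub : 0 ≤ x - y := sub_nonneg.2 hyx
  rw [abs_of_nonneg hsub, four_div_two_rpow_mul_rpow (by positivity) hsub, add_sub_cancel_right]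
  exact mul_le_mul_of_nonneg_right (two_mul_half_sub_rpow_le_signedRpow_sub hr hyx) hsub

end SignedPower

section LpNorm

variable {d : ℕ} {p : ℝ}

theorem lpnorm_nonneg (p : ℝ) (z : EuclideanSpace ℝ (Fin d)) : 0 ≤ lpnorm p z := by
  unfold lpnorm; positivity

theorem lpnorm_rpow_self (hp : p ≠ 0) (z : EuclideanSpace ℝ (Fin d)) :
    lpnorm p z ^ p = ∑ i, |z i| ^ p := by
  rw [lpnorm, ← Real.rpow_mul (by positivity), one_div_mul_cancel hp, Real.rpow_one]

theorem lpnorm_sub_comm (p : ℝ) (x y : EuclideanSpace ℝ (Fin d)) :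
    lpnorm p (x - y) = lpnorm p (y - x) := by
  simp only [lpnorm, PiLp.sub_apply, abs_sub_comm]

/-- The duality map of `ℓ_p` with gauge `t ↦ t ^ (p - 1)`, that is, the gradient of `‖z‖_p ^ p / p`.
Its values are covectors, acting on vectors through the Euclidean inner product. -/
noncomputable def lpDualityMap (p : ℝ) (z : EuclideanSpace ℝ (Fin d)) :
    EuclideanSpace ℝ (Fin d) :=
  WithLp.toLp 2 fun i ↦ signedRpow (p - 1) (z i)

theorem inner_lpDualityMap (p : ℝ) (z v : EuclideanSpace ℝ (Fin d)) :
    ⟪lpDualityMap p z, v⟫ = ∑ i, signedRpow (p - 1) (z i) * v i := by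
  simp [lpDualityMap, PiLp.inner_apply, mul_comm]

theorem inner_lpDualityMap_self (hp : 1 < p) (z : EuclideanSpace ℝ (Fin d)) :
    ⟪lpDualityMap p z, z⟫ = lpnorm p z ^ p := by
  simp only [inner_lpDualityMap, lpnorm_rpow_self (zero_lt_one.trans hp).ne',
    signedRpow_mul_self (sub_pos.2 hp), sub_add_cancel]

theorem inner_lpDualityMap_le (hp : 1 < p) (z v : EuclideanSpace ℝ (Fin d)) :
    ⟪lpDualityMap p z, v⟫ ≤ lpnorm p z ^ (p - 1) * lpnorm p v := by
  have hp0 : p ≠ 0 := by positivity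
  have hp1 : p - 1 ≠ 0 := (sub_pos.2 hp).ne'
  have habs (i : Fin d) : |signedRpow (p - 1) (z i)| ^ (p / (p - 1)) = |z i| ^ p := by
    rw [abs_signedRpow hp1, ← Real.rpow_mul (abs_nonneg _), mul_div_cancel₀ _ hp1]
  calc ⟪lpDualityMap p z, v⟫ = ∑ i, signedRpow (p - 1) (z i) * v i := inner_lpDualityMap p z v
    _ ≤ (∑ i, |signedRpow (p - 1) (z i)| ^ (p / (p - 1))) ^ (1 / (p / (p - 1)))
          * (∑ i, |v i| ^ p) ^ (1 / p) :=
        Real.inner_le_Lp_mul_Lq _ _ _ (Real.HolderConjugate.conjExponent hp).symm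
    _ = lpnorm p z ^ (p - 1) * lpnorm p v := by
        simp only [habs, ← lpnorm_rpow_self hp0 z, ← Real.rpow_mul (lpnorm_nonneg p z),
          one_div_div, mul_div_cancel₀ _ hp0, lpnorm.eq_1 p v]

theorem lpnorm_le_of_inner_lpDualityMap_sub_nonpos (hp : 1 < p)
    {x y : EuclideanSpace ℝ (Fin d)} (h : ⟪lpDualityMap p x, x - y⟫ ≤ 0) :
    lpnorm p x ≤ lpnorm p y := by
  rcases (lpnorm_nonneg p x).eq_or_lt with hx | hx
  · exact hx ▸ lpnorm_nonneg p y
  have hmul : lpnorm p x ^ (p - 1) * lpnorm p x ≤ lpnorm p x ^ (p - 1) * lpnorm p y :=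
    calc lpnorm p x ^ (p - 1) * lpnorm p x = ⟪lpDualityMap p x, x⟫ := by
          rw [inner_lpDualityMap_self hp, ← Real.rpow_add_one hx.ne', sub_add_cancel]
      _ ≤ ⟪lpDualityMap p x, y⟫ := by rwa [inner_sub_right, sub_nonpos] at h
      _ ≤ lpnorm p x ^ (p - 1) * lpnorm p y := inner_lpDualityMap_le hp x y
  exact le_of_mul_le_mul_left hmul (Real.rpow_pos_of_pos hx _)

theorem four_div_two_rpow_mul_lpnorm_sub_rpow_le_inner (hp : 2 ≤ p)
    (x y : EuclideanSpace ℝ (Fin d)) :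
    4 / 2 ^ p * lpnorm p (x - y) ^ p ≤ ⟪lpDualityMap p x - lpDualityMap p y, x - y⟫ := by
  rw [lpnorm_rpow_self (by positivity), inner_sub_left, inner_lpDualityMap, inner_lpDualityMap,
    ← Finset.sum_sub_distrib, Finset.mul_sum]
  refine Finset.sum_le_sum fun i _ ↦ ?_
  simpa [sub_mul] using four_div_two_rpow_mul_abs_sub_rpow_le (r := p - 1) (by linarith) (x i) (y i)

theorem four_div_two_rpow_mul_lpnorm_sub_rpow_le_inner_smul {s : ℝ} (hp : 2 ≤ p) (hps : p ≤ s)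
    (x y : EuclideanSpace ℝ (Fin d)) :
    4 / 2 ^ s * lpnorm p (x - y) ^ s ≤
      ⟪lpnorm p x ^ (s - p) • lpDualityMap p x - lpnorm p y ^ (s - p) • lpDualityMap p y,
        x - y⟫ := by
  have hp1 : 1 < p := by linarith
  have inner_sub_eq_add (u v : EuclideanSpace ℝ (Fin d)) :
      ⟪u - v, x - y⟫ = ⟪u, x - y⟫ + ⟪v, y - x⟫ := by
    rw [inner_sub_left, ← neg_sub x y, inner_neg_right, sub_eq_add_neg]
  have hmono := four_div_two_rpow_mul_lpnorm_sub_rpow_le_inner hp x y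
  have hholder_y : ⟪lpDualityMap p y, y - x⟫ ≤ lpnorm p y ^ (p - 1) * lpnorm p (x - y) :=
    lpnorm_sub_comm p x y ▸ inner_lpDualityMap_le hp1 y (y - x)
  rw [inner_sub_eq_add] at hmono
  rw [inner_sub_eq_add, real_inner_smul_left, real_inner_smul_left]
  exact four_div_two_rpow_mul_rpow_le hp1 hps (lpnorm_nonneg p x) (lpnorm_nonneg p y)
    (lpnorm_nonneg p (x - y)) (inner_lpDualityMap_le hp1 x (x - y)) hholder_y hmono
    (lpnorm_le_of_inner_lpDualityMap_sub_nonpos hp1)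
    (lpnorm_le_of_inner_lpDualityMap_sub_nonpos hp1)

theorem hasGradientAt_lpnorm_rpow_self (hp : 1 < p) (z : EuclideanSpace ℝ (Fin d)) :
    HasGradientAt (fun z ↦ lpnorm p z ^ p) (p • lpDualityMap p z) z := by
  have hcoord (i : Fin d) : HasFDerivAt (fun z : EuclideanSpace ℝ (Fin d) ↦ |z i| ^ p)
      ((p * |z i| ^ (p - 2) * z i) • PiLp.proj (𝕜 := ℝ) 2 (fun _ : Fin d ↦ ℝ) i) z := by
    have hproj := PiLp.hasFDerivAt_apply (𝕜 := ℝ) (E := fun _ : Fin d ↦ ℝ) 2 z i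
    exact (hasDerivAt_abs_rpow (z i) hp).comp_hasFDerivAt z hproj
  simp only [lpnorm_rpow_self (zero_lt_one.trans hp).ne']
  refine (HasFDerivAt.fun_sum fun i _ ↦ hcoord i).congr_fderiv (ContinuousLinearMap.ext fun v ↦ ?_)
  have hexp : p - 1 - 1 = p - 2 := by ring
  simp [inner_lpDualityMap, signedRpow, Finset.mul_sum, hexp, mul_assoc]

theorem hasGradientAt_lpnorm_rpow {s : ℝ} (hp : 1 < p) (hps : p ≤ s)
    (z : EuclideanSpace ℝ (Fin d)) :
    HasGradientAt (fun z ↦ lpnorm p z ^ s) ((s * lpnorm p z ^ (s - p)) • lpDualityMap p z) z := by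
  have hp0 : p ≠ 0 := by positivity
  have hrpow (q : ℝ) (z : EuclideanSpace ℝ (Fin d)) :
      (lpnorm p z ^ p) ^ (q / p) = lpnorm p z ^ q := by
    rw [← Real.rpow_mul (lpnorm_nonneg p z), mul_div_cancel₀ _ hp0]
  have hcomp := (hasGradientAt_lpnorm_rpow_self hp z).hasFDerivAt.rpow_const
    (Or.inr ((one_le_div (zero_lt_one.trans hp)).2 hps))
  simp only [← div_self hp0, ← sub_div, hrpow] at hcomp
  have hscale : s / p * lpnorm p z ^ (s - p) * p = s * lpnorm p z ^ (s - p) := by field_simp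
  rwa [← map_smul, smul_smul, hscale] at hcomp

end LpNorm

/-- For `h(z) = ‖z‖_p^s` with `s ≥ p ≥ 2`, the symmetrized Bregman divergence satisfies
`⟨∇h(z_a) − ∇h(z_b), z_a − z_b⟩ ≥ (4s/2^s)·‖z_a − z_b‖_p^s`. -/
theorem symmetrized_bregman_lower_bound {d : ℕ} (p s : ℝ) (hp : 2 ≤ p) (hps : p ≤ s)
    (h : EuclideanSpace ℝ (Fin d) → ℝ)
    (hdef : ∀ z, h z = lpnorm p z ^ s)
    (za zb : EuclideanSpace ℝ (Fin d)) :
    ⟪gradient h za - gradient h zb, za - zb⟫ ≥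
      (4 * s / 2 ^ s) * lpnorm p (za - zb) ^ s := by
  have hgrad (z : EuclideanSpace ℝ (Fin d)) :
      gradient h z = s • lpnorm p z ^ (s - p) • lpDualityMap p z := by
    rw [funext hdef, (hasGradientAt_lpnorm_rpow (by linarith) hps z).gradient, mul_smul]
  rw [hgrad, hgrad, ← smul_sub, real_inner_smul_left, mul_comm 4 s, mul_div_assoc, mul_assoc]
  exact mul_le_mul_of_nonneg_left
    (four_div_two_rpow_mul_lpnorm_sub_rpow_le_inner_smul hp hps za zb) (by linarith)
end

section
/- Let p and s be real numbers with s ≥ p ≥ 2 and let h : ℝ^d → ℝ be defined by h(z) = ‖z‖_p^s. Then for all z_a, z_b ∈ ℝ^d, the Bregman divergence of h satisfies ω_h(z_b, z_a) = h(z_b) − h(z_a) − ⟨∇h(z_a), z_b − z_a⟩ ≥ (4/2^s)·‖z_b − z_a‖_p^s. -/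
open RealInnerProductSpace

/-!
On the line, the derivative of `|t| ^ p` grows by at least `2 * p * ((y - x) / 2) ^ (p - 1)` between
`x` and `y`, and integrating this gives the case `d = 1`, `s = p`. Summing over the coordinates
gives `s = p` for every `d`.

For general `s`, write `h = F ^ q` with `F z = ∑ i, |z i| ^ p` and `q = s / p ≥ 1`, and put
`e = F (y - x) / 2 ^ p`, so that the case `s = p` reads `4 * e ≤ ω_F(y, x)`. The lower bound this
gives for `ω_h(y, x) - 4 * e ^ q` is a concave function of `e`, so it is enough to check it at the
two ends of the range `0 ≤ √e ≤ (√(F y) + √(F x)) / 2` allowed by Minkowski's inequality. At the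
left end it is the convexity of `t ^ q`. At the right end it is the one-dimensional inequality with
exponent `2 * q` at the points `-√(F x)` and `√(F y)`: on the line the case `p = s = 2` is an
equality, so nothing is lost in this reduction.
-/

section Line

theorem two_mul_half_sub_rpow_le_of_nonneg {r x y : ℝ} (hr : 1 ≤ r) (hx : 0 ≤ x) (hxy : x ≤ y) :
    2 * ((y - x) / 2) ^ r ≤ y ^ r - x ^ r := by
  have hd : 0 ≤ y - x := sub_nonneg.2 hxy
  have hhalves := two_mul_half_add_rpow_le hr hd le_rfl
  have hsuper := Real.add_rpow_le_rpow_add hd hx hr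
  rw [add_zero, Real.zero_rpow (by positivity), add_zero] at hhalves
  rw [sub_add_cancel] at hsuper
  linarith

theorem two_mul_half_sub_rpow_le_abs_rpow_mul_self {r x y : ℝ} (hr : 0 ≤ r) (hxy : x ≤ y) :
    2 * ((y - x) / 2) ^ (r + 1) ≤ |y| ^ r * y - |x| ^ r * x := by
  have hr1 : 1 ≤ r + 1 := le_add_of_nonneg_left hr
  have signed_rpow {t : ℝ} (ht : 0 ≤ t) : |t| ^ r * t = t ^ (r + 1) := by
    rw [abs_of_nonneg ht, Real.rpow_add_one' ht (by positivity)]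
  have signed_rpow_neg (t : ℝ) : |t| ^ r * t = -(|-t| ^ r * -t) := by rw [abs_neg]; ring
  rcases le_total 0 x with hx | hx
  · rw [signed_rpow hx, signed_rpow (hx.trans hxy)]
    exact two_mul_half_sub_rpow_le_of_nonneg hr1 hx hxy
  rw [signed_rpow_neg x, signed_rpow (neg_nonneg.2 hx)]
  rcases le_total 0 y with hy | hy
  · rw [signed_rpow hy, sub_neg_eq_add, sub_eq_add_neg y x]
    exact two_mul_half_add_rpow_le hr1 hy (neg_nonneg.2 hx)
  · rw [signed_rpow_neg y, signed_rpow (neg_nonneg.2 hy)]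
    have h := two_mul_half_sub_rpow_le_of_nonneg hr1 (neg_nonneg.2 hy) (neg_le_neg hxy)
    rw [neg_sub_neg] at h ⊢
    exact h

theorem four_mul_half_abs_sub_rpow_le {p : ℝ} (hp : 2 ≤ p) (x y : ℝ) :
    4 * (|y - x| / 2) ^ p ≤ |y| ^ p - |x| ^ p - p * |x| ^ (p - 2) * x * (y - x) := by
  wlog hxy : x ≤ y generalizing x y
  · have h := this (-x) (-y) (neg_le_neg (le_of_not_ge hxy))
    rw [neg_sub_neg, abs_neg, abs_neg, abs_sub_comm] at h
    linarith
  let g (t : ℝ) : ℝ := |t| ^ p - p * |x| ^ (p - 2) * x * (t - x) - 4 * ((t - x) / 2) ^ p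
  let g' (t : ℝ) : ℝ :=
    p * |t| ^ (p - 2) * t - p * |x| ^ (p - 2) * x - 2 * p * ((t - x) / 2) ^ (p - 1)
  have hg (t : ℝ) : HasDerivAt g (g' t) t := by
    have hlin := (hasDerivAt_id t).sub_const x
    have hpow := (hlin.div_const 2).rpow_const (p := p) (Or.inr (by linarith))
    refine (((hasDerivAt_abs_rpow t (by linarith : 1 < p)).sub
      (hlin.const_mul (p * |x| ^ (p - 2) * x))).sub (hpow.const_mul 4)).congr_deriv ?_
    simp only [g', id]
    ring
  have hg' : ∀ t ∈ interior (Set.Ici x), 0 ≤ g' t := by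
    intro t ht
    have h := two_mul_half_sub_rpow_le_abs_rpow_mul_self (sub_nonneg.2 hp) (interior_subset ht)
    rw [show p - 2 + 1 = p - 1 by ring] at h
    linear_combination p * h
  have hmono : MonotoneOn g (Set.Ici x) := monotoneOn_of_hasDerivWithinAt_nonneg (convex_Ici x)
    (fun t _ => (hg t).continuousAt.continuousWithinAt) (fun t _ => (hg t).hasDerivWithinAt) hg'
  have h := hmono Set.self_mem_Ici hxy hxy
  simp only [g, sub_self, zero_div, Real.zero_rpow (by positivity : p ≠ 0)] at h
  rw [abs_of_nonneg (sub_nonneg.2 hxy)]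
  linarith

end Line

section Power

variable {q u w : ℝ}

theorem mul_rpow_sub_one_mul_sub_le (hq : 1 ≤ q) (hu : 0 ≤ u) (hw : 0 ≤ w) :
    q * w ^ (q - 1) * (u - w) ≤ u ^ q - w ^ q := by
  have hq0 : 0 < q := by positivity
  have hw_mul : w ^ (q - 1) * w = w ^ q := by
    rw [← Real.rpow_add_one' hw (by linarith), sub_add_cancel]
  have young := Real.geom_mean_le_arith_mean2_weighted (one_div_nonneg.2 hq0.le)
    (sub_nonneg.2 (div_le_one_of_le₀ hq hq0.le)) (Real.rpow_nonneg hu q) (Real.rpow_nonneg hw q)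
    (add_sub_cancel _ _)
  rw [← Real.rpow_mul hu, ← Real.rpow_mul hw, mul_one_div_cancel hq0.ne', Real.rpow_one,
    mul_sub, mul_one, mul_one_div_cancel hq0.ne'] at young
  have hscaled := mul_le_mul_of_nonneg_left young hq0.le
  field_simp at hscaled
  linear_combination hscaled - q * hw_mul

theorem four_mul_half_sqrt_add_sqrt_sq_rpow_le (hq : 1 ≤ q) (hu : 0 ≤ u) (hw : 0 ≤ w) :
    4 * (((√u + √w) / 2) ^ 2) ^ q ≤
      u ^ q - w ^ q - q * w ^ (q - 1) * (u - w - 4 * ((√u + √w) / 2) ^ 2) := by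
  have sqrt_rpow {t : ℝ} (ht : 0 ≤ t) (r : ℝ) : √t ^ (2 * r) = t ^ r := by
    rw [Real.rpow_mul (Real.sqrt_nonneg t), Real.rpow_two, Real.sq_sqrt ht]
  have h := four_mul_half_abs_sub_rpow_le (by linarith : 2 ≤ 2 * q) (-√w) √u
  rw [sub_neg_eq_add, abs_neg, abs_of_nonneg (Real.sqrt_nonneg u),
    abs_of_nonneg (Real.sqrt_nonneg w), abs_of_nonneg (by positivity),
    show 2 * q - 2 = 2 * (q - 1) by ring, sqrt_rpow hu, sqrt_rpow hw, sqrt_rpow hw,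
    Real.rpow_mul (by positivity), Real.rpow_two] at h
  have parallelogram : u - w - 4 * ((√u + √w) / 2) ^ 2 = -2 * √w * (√u + √w) := by
    linear_combination -Real.sq_sqrt hu + Real.sq_sqrt hw
  rw [parallelogram]
  linarith

theorem four_mul_rpow_le_of_sqrt_le {e : ℝ} (hq : 1 ≤ q) (hu : 0 ≤ u) (hw : 0 ≤ w) (he : 0 ≤ e)
    (hsqrt : √e ≤ (√u + √w) / 2) :
    4 * e ^ q ≤ u ^ q - w ^ q - q * w ^ (q - 1) * (u - w - 4 * e) := by
  let f (t : ℝ) : ℝ := 4 * t ^ q + -(4 * q * w ^ (q - 1)) * t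
  have hf : ConvexOn ℝ (Set.Ici 0) f := ((convexOn_rpow hq).smul zero_le_four).add
    ((LinearMap.mulLeft ℝ (-(4 * q * w ^ (q - 1)))).convexOn (convex_Ici 0))
  have hle := hf.le_max_of_mem_Icc Set.self_mem_Ici (sq_nonneg ((√u + √w) / 2))
    ⟨he, (Real.sqrt_le_left (by positivity)).1 hsqrt⟩
  have hleft : f 0 ≤ u ^ q - w ^ q - q * w ^ (q - 1) * (u - w) := by
    have h := mul_rpow_sub_one_mul_sub_le hq hu hw
    simp only [f, Real.zero_rpow (by positivity : q ≠ 0)]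
    linarith
  have hright : f (((√u + √w) / 2) ^ 2) ≤ u ^ q - w ^ q - q * w ^ (q - 1) * (u - w) := by
    have h := four_mul_half_sqrt_add_sqrt_sq_rpow_le hq hu hw
    simp only [f]
    linarith
  have h := hle.trans (max_le hleft hright)
  simp only [f] at h
  linarith

end Power

section Bregman

variable {E : Type*} [NormedAddCommGroup E] [NormedSpace ℝ E]

/-- The Bregman divergence `ω_f(y, x)`, with base point `x` in the second argument. The pairing with
the gradient is written as the Fréchet derivative, so that no inner product is required. -/
noncomputable def bregmanDiv (f : E → ℝ) (y x : E) : ℝ :=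
  f y - f x - fderiv ℝ f x (y - x)

theorem four_mul_rpow_le_bregmanDiv_rpow {f : E → ℝ} {q e : ℝ} {x y : E} (hq : 1 ≤ q)
    (hf : DifferentiableAt ℝ f x) (hx : 0 ≤ f x) (hy : 0 ≤ f y) (he : 0 ≤ e)
    (hsqrt : √e ≤ (√(f y) + √(f x)) / 2) (hle : 4 * e ≤ bregmanDiv f y x) :
    4 * e ^ q ≤ bregmanDiv (fun z => f z ^ q) y x := by
  have hscaled := mul_le_mul_of_nonneg_left hle (by positivity : 0 ≤ q * f x ^ (q - 1))
  have hscalar := four_mul_rpow_le_of_sqrt_le hq hy hx he hsqrt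
  rw [bregmanDiv, (hf.hasFDerivAt.rpow_const (Or.inr hq)).fderiv, smul_apply, smul_eq_mul]
  rw [bregmanDiv] at hscaled
  linarith

end Bregman

section PowerSum

variable {ι : Type*} [Fintype ι] {p : ℝ}

theorem sum_abs_rpow_nonneg (p : ℝ) (x : ι → ℝ) : 0 ≤ ∑ i, |x i| ^ p :=
  Finset.sum_nonneg fun _ _ => Real.rpow_nonneg (abs_nonneg _) _

theorem hasFDerivAt_sum_abs_rpow (hp : 1 < p) (x : EuclideanSpace ℝ ι) :
    HasFDerivAt (fun z : EuclideanSpace ℝ ι => ∑ i, |z i| ^ p)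
      (∑ i, (p * |x i| ^ (p - 2) * x i) • (EuclideanSpace.proj i : EuclideanSpace ℝ ι →L[ℝ] ℝ))
      x := by
  refine HasFDerivAt.fun_sum fun i _ => ?_
  exact (hasDerivAt_abs_rpow (x i) hp).comp_hasFDerivAt x
    (EuclideanSpace.proj i : EuclideanSpace ℝ ι →L[ℝ] ℝ).hasFDerivAt

theorem four_mul_sum_le_bregmanDiv_sum (hp : 2 ≤ p) (x y : EuclideanSpace ℝ ι) :
    4 * ((∑ i, |y i - x i| ^ p) / 2 ^ p) ≤ bregmanDiv (fun z => ∑ i, |z i| ^ p) y x := by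
  have hsum := Finset.sum_le_sum fun i (_ : i ∈ Finset.univ) =>
    four_mul_half_abs_sub_rpow_le hp (x i) (y i)
  simp only [Real.div_rpow (abs_nonneg _) zero_le_two, ← Finset.mul_sum, ← Finset.sum_div,
    Finset.sum_sub_distrib] at hsum
  rw [bregmanDiv, (hasFDerivAt_sum_abs_rpow (by linarith) x).fderiv]
  simpa using hsum

theorem sqrt_sum_abs_sub_rpow_le (hp : 2 ≤ p) (x y : ι → ℝ) :
    √((∑ i, |y i - x i| ^ p) / 2 ^ p) ≤ (√(∑ i, |y i| ^ p) + √(∑ i, |x i| ^ p)) / 2 := by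
  have hp0 : 0 < p := by positivity
  have rpow_root {t : ℝ} (ht : 0 ≤ t) : (t ^ (1 / p)) ^ (p / 2) = √t := by
    rw [← Real.rpow_mul ht, Real.sqrt_eq_rpow]
    congr 1
    field_simp
  have hT := sum_abs_rpow_nonneg p fun i => y i - x i
  have hU := sum_abs_rpow_nonneg p y
  have hW := sum_abs_rpow_nonneg p x
  set T := ∑ i, |y i - x i| ^ p
  set U := ∑ i, |y i| ^ p
  set W := ∑ i, |x i| ^ p
  have minkowski : T ^ (1 / p) ≤ U ^ (1 / p) + W ^ (1 / p) := by
    simpa only [Pi.neg_apply, ← sub_eq_add_neg, abs_neg] using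
      Real.Lp_add_le Finset.univ y (-x) (by linarith : 1 ≤ p)
  have convex := two_mul_half_add_rpow_le (by linarith : 1 ≤ p / 2)
    (Real.rpow_nonneg hU (1 / p)) (Real.rpow_nonneg hW (1 / p))
  calc √(T / 2 ^ p) = (T ^ (1 / p) / 2) ^ (p / 2) := by
        rw [← rpow_root (by positivity), Real.div_rpow hT (by positivity), one_div,
          Real.rpow_rpow_inv zero_le_two hp0.ne']
    _ ≤ ((U ^ (1 / p) + W ^ (1 / p)) / 2) ^ (p / 2) := by gcongr
    _ ≤ ((U ^ (1 / p)) ^ (p / 2) + (W ^ (1 / p)) ^ (p / 2)) / 2 := by linarith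
    _ = (√U + √W) / 2 := by rw [rpow_root hU, rpow_root hW]

theorem four_mul_rpow_le_bregmanDiv_sum_rpow {q : ℝ} (hp : 2 ≤ p) (hq : 1 ≤ q)
    (x y : EuclideanSpace ℝ ι) :
    4 * ((∑ i, |y i - x i| ^ p) / 2 ^ p) ^ q ≤
      bregmanDiv (fun z => (∑ i, |z i| ^ p) ^ q) y x :=
  four_mul_rpow_le_bregmanDiv_rpow hq (hasFDerivAt_sum_abs_rpow (by linarith) x).differentiableAt
    (sum_abs_rpow_nonneg p x) (sum_abs_rpow_nonneg p y)
    (div_nonneg (sum_abs_rpow_nonneg p fun i => y i - x i) (by positivity))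
    (sqrt_sum_abs_sub_rpow_le hp x y) (four_mul_sum_le_bregmanDiv_sum hp x y)

end PowerSum

theorem lpnorm_rpow {d : ℕ} (p s : ℝ) (z : EuclideanSpace ℝ (Fin d)) :
    lpnorm p z ^ s = (∑ i, |z i| ^ p) ^ (s / p) := by
  rw [lpnorm, ← Real.rpow_mul (sum_abs_rpow_nonneg p z), one_div_mul_eq_div]

/-- For `h(z) = ‖z‖_p^s` with `s ≥ p ≥ 2`, the Bregman divergence satisfies
`ω_h(z_b, z_a) = h(z_b) − h(z_a) − ⟨∇h(z_a), z_b − z_a⟩ ≥ (4/2^s)·‖z_b − z_a‖_p^s`. -/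
theorem bregman_lower_bound {d : ℕ} (p s : ℝ) (hp : 2 ≤ p) (hps : p ≤ s)
    (h : EuclideanSpace ℝ (Fin d) → ℝ)
    (hdef : ∀ z, h z = lpnorm p z ^ s)
    (za zb : EuclideanSpace ℝ (Fin d)) :
    h zb - h za - ⟪gradient h za, zb - za⟫ ≥ (4 / 2 ^ s) * lpnorm p (zb - za) ^ s := by
  have hp0 : 0 < p := by positivity
  obtain rfl : h = fun z => (∑ i, |z i| ^ p) ^ (s / p) :=
    funext fun z => (hdef z).trans (lpnorm_rpow p s z)
  have hconst : ((2 : ℝ) ^ p) ^ (s / p) = 2 ^ s := by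
    rw [← Real.rpow_mul zero_le_two, mul_div_cancel₀ s hp0.ne']
  calc 4 / 2 ^ s * lpnorm p (zb - za) ^ s
      = 4 * ((∑ i, |zb i - za i| ^ p) / 2 ^ p) ^ (s / p) := by
        rw [lpnorm_rpow, Real.div_rpow (sum_abs_rpow_nonneg p fun i => zb i - za i) (by positivity),
          hconst, div_mul_eq_mul_div, mul_div_assoc]
        rfl
    _ ≤ bregmanDiv (fun z => (∑ i, |z i| ^ p) ^ (s / p)) zb za :=
        four_mul_rpow_le_bregmanDiv_sum_rpow hp ((one_le_div hp0).2 hps) za zb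
    _ = _ := by rw [bregmanDiv, inner_gradient_left]
end

section
/- Let F : ℝ^d → ℝ^d be differentiable and satisfy ⟨F(z_1) − F(z_2), z_1 − z_2⟩ ≥ −‖F(z_1) − F(z_2)‖² for all z_1, z_2 ∈ ℝ^d. Then for every z ∈ ℝ^d and every direction u ∈ ℝ^d, ⟨DF(z)u, u⟩ + ‖DF(z)u‖² ≥ 0, where DF(z) denotes the Fréchet derivative (Jacobian) of F at z. -/
open RealInnerProductSpace

/-!
For fixed `ρ`, the relation `ρ * ‖v‖ ^ 2 ≤ ⟪v, w⟫` is closed and invariant under scaling both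
vectors by the same real number. It therefore passes from the increments
`(F (z + t • u) - F z, t • u)` to `(t⁻¹ • (F (z + t • u) - F z), u)` and, as `t → 0`, to
`(DF(z) u, u)`.
-/

section Comonotone

open Filter Topology

variable {E : Type*} [NormedAddCommGroup E] [InnerProductSpace ℝ E] {ρ : ℝ}

theorem mul_norm_sq_le_inner_smul_smul {v w : E} (h : ρ * ‖v‖ ^ 2 ≤ ⟪v, w⟫) (c : ℝ) :
    ρ * ‖c • v‖ ^ 2 ≤ ⟪c • v, c • w⟫ :=
  calc
    ρ * ‖c • v‖ ^ 2 = c ^ 2 * (ρ * ‖v‖ ^ 2) := by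
      rw [norm_smul, mul_pow, Real.norm_eq_abs, sq_abs, mul_left_comm]
    _ ≤ c ^ 2 * ⟪v, w⟫ := by gcongr
    _ = ⟪c • v, c • w⟫ := by
      rw [real_inner_smul_left, real_inner_smul_right, ← mul_assoc, ← sq]

theorem mul_norm_sq_le_inner_of_hasLineDerivAt {F : E → E} {F' z u : E}
    (hF : HasLineDerivAt ℝ F F' z u)
    (hcomono : ∀ᶠ x in 𝓝 z, ρ * ‖F x - F z‖ ^ 2 ≤ ⟪F x - F z, x - z⟫) :
    ρ * ‖F'‖ ^ 2 ≤ ⟪F', u⟫ := by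
  have hquot : Tendsto (fun t : ℝ ↦ t⁻¹ • (F (z + t • u) - F z)) (𝓝[≠] 0) (𝓝 F') :=
    hF.tendsto_slope_zero
  have hline : Tendsto (fun t : ℝ ↦ z + t • u) (𝓝[≠] 0) (𝓝 z) :=
    (Continuous.tendsto' (by fun_prop) 0 z (by simp)).mono_left nhdsWithin_le_nhds
  refine le_of_tendsto_of_tendsto ((hquot.norm.pow 2).const_mul ρ)
    (hquot.inner tendsto_const_nhds) ?_
  filter_upwards [hline.eventually hcomono, self_mem_nhdsWithin] with t hincr ht
  rw [add_sub_cancel_left] at hincr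
  simpa only [inv_smul_smul₀ ht] using mul_norm_sq_le_inner_smul_smul hincr t⁻¹

theorem comonotone_jacobian_inequality_general {F : E → E} {F' : E →L[ℝ] E} {z : E}
    (hF : HasFDerivAt F F' z)
    (hcomono : ∀ᶠ x in 𝓝 z, ρ * ‖F x - F z‖ ^ 2 ≤ ⟪F x - F z, x - z⟫) (u : E) :
    ρ * ‖F' u‖ ^ 2 ≤ ⟪F' u, u⟫ :=
  mul_norm_sq_le_inner_of_hasLineDerivAt (hF.hasLineDerivAt u) hcomono

end Comonotone

/-- If a differentiable operator `F` is `(−1)`-comonotone, i.e.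
`⟨F(z_1) − F(z_2), z_1 − z_2⟩ ≥ −‖F(z_1) − F(z_2)‖²` for all `z_1, z_2`, then its
Jacobian satisfies `⟨DF(z)u, u⟩ + ‖DF(z)u‖² ≥ 0` for all `z` and directions `u`. -/
theorem comonotone_jacobian_inequality {d : ℕ}
    (F : EuclideanSpace ℝ (Fin d) → EuclideanSpace ℝ (Fin d))
    (hdiff : Differentiable ℝ F)
    (hcomono : ∀ z₁ z₂ : EuclideanSpace ℝ (Fin d),
      ⟪F z₁ - F z₂, z₁ - z₂⟫ ≥ -‖F z₁ - F z₂‖ ^ 2) :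
    ∀ z u : EuclideanSpace ℝ (Fin d),
      ⟪fderiv ℝ F z u, u⟫ + ‖fderiv ℝ F z u‖ ^ 2 ≥ 0 := by
  intro z u
  have := comonotone_jacobian_inequality_general (ρ := -1) (hdiff z).hasFDerivAt
    (.of_forall fun x ↦ by simpa only [neg_one_mul] using hcomono x z) u
  linarith
end

section
/- Let F : ℝ^d → ℝ^d be differentiable and satisfy ⟨DF(z)w, w⟩ + ‖DF(z)w‖² ≥ 0 for all z, w ∈ ℝ^d. Let v, z : [0, ∞) → ℝ^d be continuously differentiable curves satisfying z(t) + F(z(t)) = v(t) and v̇(t) = −F(z(t)) for all t ≥ 0. Then the function t ↦ ‖F(z(t))‖ = ‖v(t) − z(t)‖ is non-increasing on [0, ∞). -/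
open RealInnerProductSpace

/-!
Differentiating `z + F(z) = v` gives `ż + DF(z)ż = v̇ = -F(z)`, so that
`½ d/dt ‖F(z)‖² = ⟨F(z), DF(z)ż⟩ = -(⟨DF(z)ż, ż⟩ + ‖DF(z)ż‖²)`,
and the right-hand side is nonpositive by the Jacobian condition applied to `w = ż`.
-/

open scoped Topology

section

variable {E : Type*} [NormedAddCommGroup E] [InnerProductSpace ℝ E]

lemma antitoneOn_norm_of_inner_hasDerivWithinAt_nonpos {D : Set ℝ} (hD : Convex ℝ D)
    {u u' : ℝ → E} (hu : ContinuousOn u D)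
    (hu' : ∀ t ∈ interior D, HasDerivWithinAt u (u' t) (interior D) t)
    (hinner : ∀ t ∈ interior D, ⟪u t, u' t⟫ ≤ 0) :
    AntitoneOn (fun t ↦ ‖u t‖) D := by
  have hsq : AntitoneOn (fun t ↦ ‖u t‖ ^ 2) D :=
    antitoneOn_of_hasDerivWithinAt_nonpos hD (hu.norm.pow 2) (fun t ht ↦ (hu' t ht).norm_sq)
      fun t ht ↦ mul_nonpos_of_nonneg_of_nonpos zero_le_two (hinner t ht)
  exact fun s hs t ht hst ↦
    (sq_le_sq₀ (norm_nonneg _) (norm_nonneg _)).1 (hsq hs ht hst)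

lemma inner_nonpos_of_add_eq_neg {u w a : E} (h : w + a = -u) (ha : 0 ≤ ⟪a, w⟫ + ‖a‖ ^ 2) :
    ⟪u, a⟫ ≤ 0 := by
  have hu : ⟪u, a⟫ = -(⟪a, w⟫ + ‖a‖ ^ 2) := by
    rw [← neg_eq_iff_eq_neg.2 h, inner_neg_left, inner_add_left, real_inner_self_eq_norm_sq,
      real_inner_comm]
  exact hu.trans_le (neg_nonpos.2 ha)

lemma add_fderiv_apply_deriv_eq {𝕜 V : Type*} [NontriviallyNormedField 𝕜]
    [NormedAddCommGroup V] [NormedSpace 𝕜 V] {F : V → V} {v z : 𝕜 → V} {t : 𝕜} {v' : V}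
    (hF : DifferentiableAt 𝕜 F (z t)) (hz : DifferentiableAt 𝕜 z t) (hv : HasDerivAt v v' t)
    (hadd : ∀ᶠ s in 𝓝 t, z s + F (z s) = v s) :
    deriv z t + fderiv 𝕜 F (z t) (deriv z t) = v' :=
  have hsum : HasDerivAt (fun s ↦ z s + F (z s))
      (deriv z t + fderiv 𝕜 F (z t) (deriv z t)) t :=
    hz.hasDerivAt.add (hF.hasFDerivAt.comp_hasDerivAt t hz.hasDerivAt)
  hsum.unique (hv.congr_of_eventuallyEq hadd)

theorem operator_norm_nonincreasing_along_dynamics_general {D : Set ℝ} (hD : Convex ℝ D)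
    {F : E → E} {v z : ℝ → E} (hv : ContinuousOn v D) (hz : ContinuousOn z D)
    (hz' : ∀ t ∈ interior D, DifferentiableAt ℝ z t)
    (hF : ∀ t ∈ interior D, DifferentiableAt ℝ F (z t))
    (hjac : ∀ t ∈ interior D, ∀ w : E,
      0 ≤ ⟪fderiv ℝ F (z t) w, w⟫ + ‖fderiv ℝ F (z t) w‖ ^ 2)
    (hadd : ∀ t ∈ D, z t + F (z t) = v t)
    (hv' : ∀ t ∈ interior D, HasDerivAt v (-F (z t)) t) :
    AntitoneOn (fun t ↦ ‖F (z t)‖) D := by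
  have hFz : ContinuousOn (fun t ↦ F (z t)) D :=
    (hv.sub hz).congr fun t ht ↦ eq_sub_of_add_eq' (hadd t ht)
  refine antitoneOn_norm_of_inner_hasDerivWithinAt_nonpos hD hFz
    (u' := fun t ↦ fderiv ℝ F (z t) (deriv z t)) (fun t ht ↦ ?_) fun t ht ↦ ?_
  · exact ((hF t ht).hasFDerivAt.comp_hasDerivAt t (hz' t ht).hasDerivAt).hasDerivWithinAt
  · have hadd_near : ∀ᶠ s in 𝓝 t, z s + F (z s) = v s :=
      Filter.eventually_of_mem (mem_interior_iff_mem_nhds.1 ht) hadd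
    have hsum : deriv z t + fderiv ℝ F (z t) (deriv z t) = -F (z t) :=
      add_fderiv_apply_deriv_eq (hF t ht) (hz' t ht) (hv' t ht) hadd_near
    exact inner_nonpos_of_add_eq_neg hsum (hjac t ht _)

end

/-- If the Jacobian of a differentiable operator `F` satisfies
`⟨DF(z)w, w⟩ + ‖DF(z)w‖² ≥ 0` everywhere, then along the continuous-time
extragradient dynamics `z(t) + F(z(t)) = v(t)`, `v̇(t) = −F(z(t))`,
the function `t ↦ ‖F(z(t))‖` is non-increasing on `[0, ∞)`. -/
theorem operator_norm_nonincreasing_along_dynamics {d : ℕ}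
    (F : EuclideanSpace ℝ (Fin d) → EuclideanSpace ℝ (Fin d))
    (hdiff : Differentiable ℝ F)
    (hjac : ∀ z w : EuclideanSpace ℝ (Fin d),
      ⟪fderiv ℝ F z w, w⟫ + ‖fderiv ℝ F z w‖ ^ 2 ≥ 0)
    (v z : ℝ → EuclideanSpace ℝ (Fin d))
    (hvC1 : ContDiffOn ℝ 1 v (Set.Ici 0)) (hzC1 : ContDiffOn ℝ 1 z (Set.Ici 0))
    (hdyn1 : ∀ t : ℝ, 0 ≤ t → z t + F (z t) = v t)
    (hdyn2 : ∀ t ∈ Set.Ici (0 : ℝ), HasDerivWithinAt v (-F (z t)) (Set.Ici 0) t) :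
    AntitoneOn (fun t => ‖F (z t)‖) (Set.Ici 0) :=
  operator_norm_nonincreasing_along_dynamics_general (convex_Ici 0)
    hvC1.continuousOn hzC1.continuousOn
    (fun _ ht ↦ (hzC1.differentiableOn one_ne_zero).differentiableAt
      (mem_interior_iff_mem_nhds.1 ht))
    (fun t _ ↦ hdiff (z t)) (fun t _ ↦ hjac (z t)) hdyn1
    fun t ht ↦ (hdyn2 t (interior_subset ht)).hasDerivAt (mem_interior_iff_mem_nhds.1 ht)
end

section
/- Let ρ ∈ (−1, 0] and D > 0. Let F : ℝ^d → ℝ^d be continuously differentiable and ρ-comonotone, i.e. ⟨F(z_1) − F(z_2), z_1 − z_2⟩ ≥ ρ·‖F(z_1) − F(z_2)‖² for all z_1, z_2 ∈ ℝ^d, and let z* ∈ ℝ^d with F(z*) = 0 and z_0 ∈ ℝ^d with ‖z_0 − z*‖ ≤ D. Let u, v, z : [0, ∞) → ℝ^d be continuously differentiable with u(0) = 0 and, for all t ≥ 0: u̇(t) = −F(z(t)), v(t) = z_0 + u(t), and z(t) + F(z(t)) = v(t). Then for every t > 0: ‖F(z(t))‖² ≤ D² / (2(2 + 2ρ)·t);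 in particular ‖F(z(t))‖² = O(1/t). -/
open RealInnerProductSpace

/-!
Put `c = 1 + ρ`, `w = v - z*` and `f = F ∘ z`. Comonotonicity of `F` makes `f` a `c`-cocoercive
function of `v`, so `ẇ = -f` with `c‖f‖² ≤ ⟪f, w⟫` and, passing to the limit in difference
quotients, `c‖ḟ‖² ≤ -⟪f, ḟ⟫`. For a fixed horizon `T` these two inequalities make a suitable
quadratic form in `f` and `w - y f`, with scalar weights depending on `t` and `T`, decrease on
`[0, T]`; it equals `‖w 0‖²` at time `0` and dominates `4cT‖f T‖²` at time `T`.

When `T` is small against `c` the extremal trajectories have constant `f`, hence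
`w = (c + T - t) f`, and the shift `y = c + T - t` gives the bound `(c + T)²‖f T‖² ≤ ‖w 0‖²`, which
suffices as `(c + T)² ≥ 4cT`. For large `T` the shift is `y = c`, so that `w - y f = z - z*` when
`ρ = 0`.
-/

section

variable {E : Type*} [NormedAddCommGroup E] [InnerProductSpace ℝ E]

lemma two_mul_mul_inner_le_of_sq_le_mul {α β δ : ℝ} (hα : 0 ≤ α) (hδ : 0 ≤ δ)
    (h : β ^ 2 ≤ α * δ) (a b : E) :
    2 * β * ⟪a, b⟫ ≤ α * ‖a‖ ^ 2 + δ * ‖b‖ ^ 2 := by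
  have hβ : |β| ≤ √α * √δ := by
    rw [← Real.sqrt_mul hα]
    exact Real.abs_le_sqrt h
  calc 2 * β * ⟪a, b⟫ ≤ 2 * (|β| * |⟪a, b⟫|) := by
        rw [← abs_mul, mul_assoc]
        gcongr
        exact le_abs_self _
    _ ≤ 2 * (√α * √δ * (‖a‖ * ‖b‖)) := by
        gcongr
        exact abs_real_inner_le_norm a b
    _ = 2 * (√α * ‖a‖) * (√δ * ‖b‖) := by ring
    _ ≤ (√α * ‖a‖) ^ 2 + (√δ * ‖b‖) ^ 2 := two_mul_le_add_sq _ _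
    _ = α * ‖a‖ ^ 2 + δ * ‖b‖ ^ 2 := by
        rw [mul_pow, mul_pow, Real.sq_sqrt hα, Real.sq_sqrt hδ]

/-- A solution of `ẇ = -A w`, where `A` is a `c`-cocoercive operator with `A 0 = 0`, seen only along
the trajectory: `f` stands for `A ∘ w` and `g` for its time derivative. The two inequalities are
cocoercivity between `w t` and `0`, and its infinitesimal form at `w t`. -/
structure IsCocoerciveTrajectory (c : ℝ) (w f g : ℝ → E) : Prop where
  continuousOn_state : ContinuousOn w (Set.Ici 0)
  continuousOn_velocity : ContinuousOn f (Set.Ici 0)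
  hasDerivAt_state : ∀ t, 0 < t → HasDerivAt w (-f t) t
  hasDerivAt_velocity : ∀ t, 0 < t → HasDerivAt f (g t) t
  cocoercive : ∀ t, 0 < t → c * ‖f t‖ ^ 2 ≤ ⟪f t, w t⟫
  cocoercive_deriv : ∀ t, 0 < t → c * ‖g t‖ ^ 2 ≤ -⟪f t, g t⟫

/-- Time-dependent weights on `[0, T]`, with their derivatives, for the quadratic form
`P‖f‖² + 2R⟪f, w - y f⟫ + C‖w - y f‖²`. The inequalities on `(0, T)` make its derivative along a
`c`-cocoercive trajectory nonpositive; the conditions at `0` make it equal to `‖w 0‖²` there, and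
those at `T` make it at least `P‖f‖²` there. -/
structure LyapunovWeights (c T : ℝ) where
  (y P R C y' P' R' C' : ℝ → ℝ)
  hasDerivAt_y : ∀ t, HasDerivAt y (y' t) t
  hasDerivAt_P : ∀ t, HasDerivAt P (P' t) t
  hasDerivAt_R : ∀ t, HasDerivAt R (R' t) t
  hasDerivAt_C : ∀ t, HasDerivAt C (C' t) t
  mul_y_le_P : ∀ t ∈ Set.Ioo 0 T, R t * y t ≤ P t
  deriv_C_nonpos : ∀ t ∈ Set.Ioo 0 T, C' t ≤ 0
  discriminant_le : ∀ t ∈ Set.Ioo 0 T,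
    (R t - C t * y t) ^ 2 ≤ 2 * c * (P t - R t * y t) * -C' t
  deriv_R_le : ∀ t ∈ Set.Ioo 0 T, R' t ≤ C t * (1 + y' t)
  deriv_P_le : ∀ t ∈ Set.Ioo 0 T,
    P' t ≤ 2 * R t * (1 + y' t) - 2 * (C t * (1 + y' t) - R' t) * (y t - c)
  P_zero : P 0 = y 0 ^ 2
  R_zero : R 0 = y 0
  C_zero : C 0 = 1
  y_end : y T = c
  R_end_nonneg : 0 ≤ R T
  C_end_nonneg : 0 ≤ C T

namespace LyapunovWeights

variable {c T : ℝ} {w f g : ℝ → E}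

/-- The Lyapunov function `P‖f‖² + 2R⟪f, w - y f⟫ + C‖w - y f‖²` with weights `W`. -/
def energy (W : LyapunovWeights c T) (w f : ℝ → E) (t : ℝ) : ℝ :=
  W.P t * ‖f t‖ ^ 2 + 2 * W.R t * ⟪f t, w t - W.y t • f t⟫ + W.C t * ‖w t - W.y t • f t‖ ^ 2

lemma hasDerivAt_energy (W : LyapunovWeights c T) {t : ℝ} {f' : E} (hw : HasDerivAt w (-f t) t)
    (hf : HasDerivAt f f' t) :
    HasDerivAt (W.energy w f)
      (2 * (W.P t - W.R t * W.y t) * ⟪f t, f'⟫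
        + 2 * (W.R t - W.C t * W.y t) * ⟪f', w t - W.y t • f t⟫
        + W.C' t * ‖w t - W.y t • f t‖ ^ 2
        + (W.P' t - 2 * W.R t * (1 + W.y' t)) * ‖f t‖ ^ 2
        + 2 * (W.R' t - W.C t * (1 + W.y' t)) * ⟪f t, w t - W.y t • f t⟫) t := by
  have hh : HasDerivAt (fun s => w s - W.y s • f s)
      (-f t - (W.y t • f' + W.y' t • f t)) t := hw.sub ((W.hasDerivAt_y t).smul hf)
  refine ((((W.hasDerivAt_P t).mul hf.norm_sq).add
    (((W.hasDerivAt_R t).const_mul 2).mul (hf.inner ℝ hh))).add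
    ((W.hasDerivAt_C t).mul hh.norm_sq)).congr_deriv ?_
  generalize w t - W.y t • f t = h
  simp only [inner_sub_right, inner_add_right, inner_neg_right, real_inner_smul_right,
    real_inner_self_eq_norm_sq, real_inner_comm (f t) h, real_inner_comm f' h]
  ring

lemma deriv_energy_nonpos (W : LyapunovWeights c T) (hc : 0 ≤ c)
    (h : IsCocoerciveTrajectory c w f g) {t : ℝ} (ht : t ∈ Set.Ioo 0 T) :
    deriv (W.energy w f) t ≤ 0 := by
  rw [(W.hasDerivAt_energy (h.hasDerivAt_state t ht.1) (h.hasDerivAt_velocity t ht.1)).deriv]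
  have hPR : 0 ≤ W.P t - W.R t * W.y t := sub_nonneg.2 (W.mul_y_le_P t ht)
  have hfw : 0 ≤ ⟪f t, w t - W.y t • f t⟫ + (W.y t - c) * ‖f t‖ ^ 2 := by
    rw [inner_sub_right, real_inner_smul_right, real_inner_self_eq_norm_sq]
    linarith [h.cocoercive t ht.1]
  have hfg := mul_le_mul_of_nonneg_left (h.cocoercive_deriv t ht.1) hPR
  have hgh := two_mul_mul_inner_le_of_sq_le_mul (mul_nonneg (mul_nonneg zero_le_two hc) hPR)
    (neg_nonneg.2 (W.deriv_C_nonpos t ht)) (W.discriminant_le t ht) (g t) (w t - W.y t • f t)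
  have hff := mul_le_mul_of_nonneg_right (W.deriv_P_le t ht) (sq_nonneg ‖f t‖)
  have hfh := mul_nonneg (sub_nonneg.2 (W.deriv_R_le t ht)) hfw
  linarith

lemma antitoneOn_energy (W : LyapunovWeights c T) (hc : 0 ≤ c)
    (h : IsCocoerciveTrajectory c w f g) :
    AntitoneOn (W.energy w f) (Set.Icc 0 T) := by
  have hw : ContinuousOn w (Set.Icc 0 T) := h.continuousOn_state.mono Set.Icc_subset_Ici_self
  have hf : ContinuousOn f (Set.Icc 0 T) := h.continuousOn_velocity.mono Set.Icc_subset_Ici_self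
  have hweight {a a' : ℝ → ℝ} (ha : ∀ t, HasDerivAt a (a' t) t) : Continuous a :=
    continuous_iff_continuousAt.2 fun t => (ha t).continuousAt
  have hy := hweight W.hasDerivAt_y
  have hP := hweight W.hasDerivAt_P
  have hR := hweight W.hasDerivAt_R
  have hC := hweight W.hasDerivAt_C
  refine antitoneOn_of_deriv_nonpos (convex_Icc 0 T) ?_ ?_ ?_
  · unfold energy
    fun_prop
  · rw [interior_Icc]
    exact fun t ht => (W.hasDerivAt_energy (h.hasDerivAt_state t ht.1)
      (h.hasDerivAt_velocity t ht.1)).differentiableAt.differentiableWithinAt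
  · rw [interior_Icc]
    exact fun t ht => W.deriv_energy_nonpos hc h ht

lemma energy_zero (W : LyapunovWeights c T) (w f : ℝ → E) : W.energy w f 0 = ‖w 0‖ ^ 2 := by
  have hw : w 0 = W.y 0 • f 0 + (w 0 - W.y 0 • f 0) := by abel
  have hnorm : ‖w 0‖ ^ 2 = ‖W.y 0 • f 0 + (w 0 - W.y 0 • f 0)‖ ^ 2 := by rw [← hw]
  rw [hnorm, norm_add_sq_real, norm_smul, mul_pow, Real.norm_eq_abs, sq_abs, real_inner_smul_left,
    energy, W.P_zero, W.R_zero, W.C_zero]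
  ring

lemma mul_norm_sq_le_energy_end (W : LyapunovWeights c T) (h : c * ‖f T‖ ^ 2 ≤ ⟪f T, w T⟫) :
    W.P T * ‖f T‖ ^ 2 ≤ W.energy w f T := by
  have hfh : 0 ≤ ⟪f T, w T - W.y T • f T⟫ := by
    rw [W.y_end, inner_sub_right, real_inner_smul_right, real_inner_self_eq_norm_sq]
    exact sub_nonneg.2 h
  have hR := mul_nonneg W.R_end_nonneg hfh
  have hC := mul_nonneg W.C_end_nonneg (sq_nonneg ‖w T - W.y T • f T‖)
  rw [energy]
  linarith

theorem mul_norm_sq_le (W : LyapunovWeights c T) (hc : 0 ≤ c) (hT : 0 < T)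
    (h : IsCocoerciveTrajectory c w f g) : W.P T * ‖f T‖ ^ 2 ≤ ‖w 0‖ ^ 2 :=
  calc W.P T * ‖f T‖ ^ 2 ≤ W.energy w f T := W.mul_norm_sq_le_energy_end (h.cocoercive T hT)
    _ ≤ W.energy w f 0 :=
        W.antitoneOn_energy hc h (Set.left_mem_Icc.2 hT.le) (Set.right_mem_Icc.2 hT.le) hT.le
    _ = ‖w 0‖ ^ 2 := W.energy_zero w f

end LyapunovWeights

section ScalarInequalities

variable {c e k b τ : ℝ}

lemma shortHorizon_discriminant_le (he : 0 ≤ e) (hec : 9 * e ≤ 32 * c) (hτ₀ : 0 ≤ τ)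
    (hτ₁ : τ ≤ 1) :
    (e * τ * (1 + 2 * (τ * (1 - τ)))) ^ 2 ≤ 8 * c * e * τ ^ 2 := by
  have hσ₀ : 0 ≤ τ * (1 - τ) := mul_nonneg hτ₀ (sub_nonneg.2 hτ₁)
  have hσ₁ : 1 + 2 * (τ * (1 - τ)) ≤ 3 / 2 := by nlinarith [sq_nonneg (2 * τ - 1)]
  calc (e * τ * (1 + 2 * (τ * (1 - τ)))) ^ 2 ≤ (e * τ * (3 / 2)) ^ 2 :=
        pow_le_pow_left₀ (mul_nonneg (mul_nonneg he hτ₀) (by linarith))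
          (mul_le_mul_of_nonneg_left hσ₁ (mul_nonneg he hτ₀)) 2
    _ = 9 * e * (e * τ ^ 2 / 4) := by ring
    _ ≤ 32 * c * (e * τ ^ 2 / 4) := by gcongr
    _ = 8 * c * e * τ ^ 2 := by ring

lemma longHorizon_discriminant_le (hb : b = 3 / 2 - 3 / 4 * k) (hτ₁ : τ ≤ 1) :
    τ * (1 + b * (2 - τ)) ^ 2 ≤
      2 * (2 * (1 + b * τ - b / 3 * τ ^ 2) - b * k * (2 - τ)) := by
  obtain rfl : k = 2 - 4 / 3 * b := by linarith
  rw [← sub_nonneg]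
  -- The difference is a quadratic polynomial in `b`, with leading coefficient `a`.
  let a := (2 - τ) * ((τ - 1) ^ 2 + 5 / 3)
  have ha : 0 < 4 * a := mul_pos four_pos (mul_pos (by linarith) (by positivity))
  refine nonneg_of_mul_nonneg_right ?_ ha
  calc 0 ≤ (2 * a * b - (8 - 4 * τ - 2 / 3 * τ ^ 2)) ^ 2
        + 32 / 9 * (τ ^ 4 + 27 / 2 * (τ - 2 / 3) ^ 2 + 21 / 2 * (τ ^ 2 * (1 - τ))) := by
        have := mul_nonneg (sq_nonneg τ) (sub_nonneg.2 hτ₁)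
        positivity
    _ = _ := by ring

end ScalarInequalities

namespace LyapunovWeights

variable {c T : ℝ}

/-- Weights giving `(c + T)²‖f T‖² ≤ ‖w 0‖²`. The form is
`‖w + t f‖² - 2 (t / (c + T))² ‖w - (c + T - t) f‖²`. -/
noncomputable def shortHorizon (hc : 0 < c) (hT : 0 < T) (hTc : T ≤ 12 / 5 * c) :
    LyapunovWeights c T where
  y t := c + T - t
  P _ := (c + T) ^ 2
  R _ := c + T
  C t := 1 - 2 * (t / (c + T)) ^ 2
  y' _ := -1
  P' _ := 0
  R' _ := 0
  C' t := -(4 * (t / (c + T)) / (c + T))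
  hasDerivAt_y t := (hasDerivAt_id t).const_sub _
  hasDerivAt_P t := hasDerivAt_const t _
  hasDerivAt_R t := hasDerivAt_const t _
  hasDerivAt_C t := ((((hasDerivAt_id t).div_const _).pow 2).const_mul 2 |>.const_sub 1).congr_deriv
    (by simp only [id]; ring)
  mul_y_le_P t ht := by nlinarith [ht.1]
  deriv_C_nonpos t ht := neg_nonpos.2 (by have := ht.1; positivity)
  discriminant_le t ht := by
    have he : 0 < c + T := by positivity
    have hτ₁ : t / (c + T) ≤ 1 := (div_le_one he).2 (by linarith [ht.2])
    convert! shortHorizon_discriminant_le he.le (c := c) (by linarith) (div_nonneg ht.1.le he.le)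
      hτ₁ using 1 <;> field_simp <;> ring
  deriv_R_le _ _ := by norm_num
  deriv_P_le _ _ := by norm_num
  P_zero := by simp
  R_zero := by simp
  C_zero := by simp
  y_end := by ring
  R_end_nonneg := by positivity
  C_end_nonneg := by
    have : (T / (c + T)) ^ 2 ≤ 1 / 2 := by
      rw [div_pow, div_le_iff₀ (by positivity)]
      nlinarith
    linarith

/-- Weights giving `c (c + 2T (1 + 2b/3))‖f T‖² ≤ ‖w 0‖²`. -/
noncomputable def longHorizon (b : ℝ) (hc : 0 < c) (hT : 0 < T) (hb₀ : 0 ≤ b)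
    (hb₁ : 2 * b * (c / T) ≤ 1)
    (hdisc : ∀ τ ∈ Set.Ioo (0 : ℝ) 1, τ * (1 + b * (2 - τ)) ^ 2 ≤
      2 * (2 * (1 + b * τ - b / 3 * τ ^ 2) - b * (c / T) * (2 - τ))) :
    LyapunovWeights c T where
  y _ := c
  P t := c * (c + 2 * T * (t / T + b * (t / T) ^ 2 - b / 3 * (t / T) ^ 3))
  R t := c * (1 + 2 * b * (t / T) - b * (t / T) ^ 2)
  C t := 1 - t / T
  y' _ := 0
  P' t := 2 * (c * (1 + 2 * b * (t / T) - b * (t / T) ^ 2))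
  R' t := 2 * b * (c / T) * (1 - t / T)
  C' _ := -(1 / T)
  hasDerivAt_y t := hasDerivAt_const t _
  hasDerivAt_P t := by
    have h := (hasDerivAt_id t).div_const T
    refine (((h.add ((h.pow 2).const_mul b)).sub ((h.pow 3).const_mul (b / 3))).const_mul
      (2 * T) |>.const_add c |>.const_mul c).congr_deriv ?_
    simp only [id, Nat.cast_ofNat, Nat.reduceSub, pow_one]
    field_simp
  hasDerivAt_R t := by
    have h := (hasDerivAt_id t).div_const T
    refine (((h.const_mul (2 * b)).const_add 1).sub ((h.pow 2).const_mul b) |>.const_mul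
      c).congr_deriv ?_
    simp only [id]
    ring
  hasDerivAt_C t := ((hasDerivAt_id t).div_const T).const_sub 1
  mul_y_le_P t ht := by
    have hτ : t / T ∈ Set.Ioo 0 1 := ⟨div_pos ht.1 hT, (div_lt_one hT).2 ht.2⟩
    have h := (mul_nonneg hτ.1.le (sq_nonneg _)).trans (hdisc _ hτ)
    have h' := mul_nonneg (mul_nonneg hc.le ht.1.le) h
    rw [← sub_nonneg]
    convert! div_nonneg h' zero_le_two using 1
    field_simp
    ring
  deriv_C_nonpos t ht := neg_nonpos.2 (by positivity)
  discriminant_le t ht := by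
    have hτ : t / T ∈ Set.Ioo 0 1 := ⟨div_pos ht.1 hT, (div_lt_one hT).2 ht.2⟩
    convert! mul_le_mul_of_nonneg_left (hdisc _ hτ) (mul_nonneg (sq_nonneg c) hτ.1.le) using 1 <;>
      field_simp <;> ring
  deriv_R_le t ht := by
    have : t / T ≤ 1 := (div_le_one hT).2 ht.2.le
    nlinarith
  deriv_P_le _ _ := by simp
  P_zero := by simp; ring
  R_zero := by simp
  C_zero := by simp
  y_end := rfl
  R_end_nonneg := by
    rw [div_self hT.ne']
    exact mul_nonneg hc.le (by linarith)
  C_end_nonneg := by simp [hT.ne']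

end LyapunovWeights

theorem IsCocoerciveTrajectory.four_mul_mul_norm_sq_le {c T : ℝ} {w f g : ℝ → E} (hc : 0 < c)
    (hT : 0 < T) (h : IsCocoerciveTrajectory c w f g) :
    4 * c * T * ‖f T‖ ^ 2 ≤ ‖w 0‖ ^ 2 := by
  rcases le_total T (12 / 5 * c) with hTc | hTc
  · calc 4 * c * T * ‖f T‖ ^ 2 ≤ (c + T) ^ 2 * ‖f T‖ ^ 2 := by
          gcongr
          exact four_mul_le_sq_add c T
      _ ≤ ‖w 0‖ ^ 2 := (LyapunovWeights.shortHorizon hc hT hTc).mul_norm_sq_le hc.le hT h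
  · have hk : c / T ≤ 5 / 12 := (div_le_iff₀ hT).2 (by linarith)
    obtain ⟨b, hb⟩ : ∃ b, b = 3 / 2 - 3 / 4 * (c / T) := ⟨_, rfl⟩
    let W := LyapunovWeights.longHorizon b hc hT (by linarith) (by nlinarith)
      fun τ hτ => longHorizon_discriminant_le hb hτ.2.le
    have hWP : W.P T = 4 * c * T := by
      simp only [W, LyapunovWeights.longHorizon, div_self hT.ne', hb]
      field_simp
      ring
    exact hWP ▸ W.mul_norm_sq_le hc.le hT h

/-- `ρ`-comonotonicity: monotonicity if `ρ = 0`, cocoercivity if `ρ > 0`, and a relaxation of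
monotonicity if `ρ < 0`. -/
def IsComonotone (ρ : ℝ) (F : E → E) : Prop :=
  ∀ z₁ z₂, ρ * ‖F z₁ - F z₂‖ ^ 2 ≤ ⟪F z₁ - F z₂, z₁ - z₂⟫

lemma IsComonotone.cocoercive_add {ρ : ℝ} {F : E → E} (hF : IsComonotone ρ F) (z₁ z₂ : E) :
    (1 + ρ) * ‖F z₁ - F z₂‖ ^ 2 ≤ ⟪F z₁ - F z₂, (z₁ + F z₁) - (z₂ + F z₂)⟫ := by
  rw [add_sub_add_comm, inner_add_right, real_inner_self_eq_norm_sq]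
  linarith [hF z₁ z₂]

lemma mul_norm_sq_le_inner_of_hasDerivAt {c t : ℝ} {f w : ℝ → E} {f' w' : E}
    (hf : HasDerivAt f f' t) (hw : HasDerivAt w w' t)
    (h : ∀ᶠ s in nhds t, c * ‖f s - f t‖ ^ 2 ≤ ⟪f s - f t, w s - w t⟫) :
    c * ‖f'‖ ^ 2 ≤ ⟪f', w'⟫ := by
  have hf' := hasDerivAt_iff_tendsto_slope.1 hf
  have hw' := hasDerivAt_iff_tendsto_slope.1 hw
  refine le_of_tendsto_of_tendsto ((hf'.norm.pow 2).const_mul c) (hf'.inner hw' (𝕜 := ℝ)) ?_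
  filter_upwards [nhdsWithin_le_nhds h] with s hs
  calc c * ‖slope f t s‖ ^ 2 = (s - t)⁻¹ ^ 2 * (c * ‖f s - f t‖ ^ 2) := by
        rw [slope_def_module, norm_smul, mul_pow, Real.norm_eq_abs, sq_abs]
        ring
    _ ≤ (s - t)⁻¹ ^ 2 * ⟪f s - f t, w s - w t⟫ := by gcongr
    _ = ⟪slope f t s, slope w t s⟫ := by
        rw [slope_def_module, slope_def_module, real_inner_smul_left, real_inner_smul_right]
        ring

lemma IsComonotone.isCocoerciveTrajectory {ρ : ℝ} {F : E → E} (hF : IsComonotone ρ F)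
    (hFd : Differentiable ℝ F) {zstar : E} (hzstar : F zstar = 0) {v z : ℝ → E}
    (hz : DifferentiableOn ℝ z (Set.Ici 0))
    (hv : ∀ t ∈ Set.Ici (0 : ℝ), HasDerivWithinAt v (-F (z t)) (Set.Ici 0) t)
    (hzv : ∀ t, 0 ≤ t → z t + F (z t) = v t) :
    IsCocoerciveTrajectory (1 + ρ) (fun t => v t - zstar) (F ∘ z) (deriv (F ∘ z)) := by
  have hv' : ∀ t, 0 < t → HasDerivAt v (-F (z t)) t := fun t ht =>
    (hv t ht.le).hasDerivAt (Ici_mem_nhds ht)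
  have hf : ∀ t, 0 < t → HasDerivAt (F ∘ z) (deriv (F ∘ z) t) t := fun t ht =>
    ((hFd (z t)).comp t (hz.differentiableAt (Ici_mem_nhds ht))).hasDerivAt
  refine ⟨?_, hFd.continuous.comp_continuousOn hz.continuousOn, fun t ht => (hv' t ht).sub_const _,
    hf, fun t ht => ?_, fun t ht => ?_⟩
  · exact (HasDerivWithinAt.continuousOn hv).sub continuousOn_const
  · simpa [hzstar, hzv t ht.le] using hF.cocoercive_add (z t) zstar
  · rw [real_inner_comm, ← inner_neg_right]
    refine mul_norm_sq_le_inner_of_hasDerivAt (hf t ht) (hv' t ht) ?_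
    filter_upwards [Ici_mem_nhds ht] with s hs
    rw [← hzv s hs, ← hzv t ht.le]
    exact hF.cocoercive_add (z s) (z t)

theorem comonotone_continuous_time_last_iterate_general {ρ D : ℝ} (hρ : -1 < ρ) {F : E → E}
    (hFd : Differentiable ℝ F) (hF : IsComonotone ρ F) {zstar z₀ : E} (hzstar : F zstar = 0)
    (hdist : ‖z₀ - zstar‖ ≤ D) {u v z : ℝ → E} (hu0 : u 0 = 0)
    (hz : DifferentiableOn ℝ z (Set.Ici 0))
    (hdyn1 : ∀ t ∈ Set.Ici (0 : ℝ), HasDerivWithinAt u (-F (z t)) (Set.Ici 0) t)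
    (hdyn2 : ∀ t : ℝ, 0 ≤ t → v t = z₀ + u t)
    (hdyn3 : ∀ t : ℝ, 0 ≤ t → z t + F (z t) = v t) :
    ∀ t : ℝ, 0 < t → ‖F (z t)‖ ^ 2 ≤ D ^ 2 / (2 * (2 + 2 * ρ) * t) := by
  intro t ht
  have hc : 0 < 1 + ρ := by linarith
  have hv : ∀ s ∈ Set.Ici (0 : ℝ), HasDerivWithinAt v (-F (z s)) (Set.Ici 0) s := fun s hs =>
    ((hdyn1 s hs).const_add z₀).congr hdyn2 (hdyn2 s hs)
  have hv0 : v 0 = z₀ := by rw [hdyn2 0 le_rfl, hu0, add_zero]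
  have key := (hF.isCocoerciveTrajectory hFd hzstar hz hv hdyn3).four_mul_mul_norm_sq_le hc ht
  rw [le_div_iff₀ (mul_pos (by linarith) ht)]
  calc ‖F (z t)‖ ^ 2 * (2 * (2 + 2 * ρ) * t) = 4 * (1 + ρ) * t * ‖F (z t)‖ ^ 2 := by ring
    _ ≤ ‖v 0 - zstar‖ ^ 2 := key
    _ ≤ D ^ 2 := by rw [hv0]; gcongr

end

/-- Last-iterate convergence in continuous time for `ρ`-comonotone operators,
`ρ ∈ (−1, 0]`: along the continuous-time extragradient dynamics
`u̇(t) = −F(z(t))`, `v(t) = z_0 + u(t)`, `z(t) + F(z(t)) = v(t)`, with `F(z*) = 0`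
and `‖z_0 − z*‖ ≤ D`, we have `‖F(z(t))‖² ≤ D²/(2(2 + 2ρ)t)` for all `t > 0`. -/
theorem comonotone_continuous_time_last_iterate {d : ℕ}
    (ρ D : ℝ) (hρ₁ : -1 < ρ) (hρ₂ : ρ ≤ 0) (hD : 0 < D)
    (F : EuclideanSpace ℝ (Fin d) → EuclideanSpace ℝ (Fin d))
    (hF : ContDiff ℝ 1 F)
    (hcomono : ∀ z₁ z₂ : EuclideanSpace ℝ (Fin d),
      ⟪F z₁ - F z₂, z₁ - z₂⟫ ≥ ρ * ‖F z₁ - F z₂‖ ^ 2)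
    (zstar z₀ : EuclideanSpace ℝ (Fin d)) (hzstar : F zstar = 0)
    (hdist : ‖z₀ - zstar‖ ≤ D)
    (u v z : ℝ → EuclideanSpace ℝ (Fin d)) (hu0 : u 0 = 0)
    (huC1 : ContDiffOn ℝ 1 u (Set.Ici 0)) (hvC1 : ContDiffOn ℝ 1 v (Set.Ici 0))
    (hzC1 : ContDiffOn ℝ 1 z (Set.Ici 0))
    (hdyn1 : ∀ t ∈ Set.Ici (0 : ℝ), HasDerivWithinAt u (-F (z t)) (Set.Ici 0) t)
    (hdyn2 : ∀ t : ℝ, 0 ≤ t → v t = z₀ + u t)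
    (hdyn3 : ∀ t : ℝ, 0 ≤ t → z t + F (z t) = v t) :
    ∀ t : ℝ, 0 < t → ‖F (z t)‖ ^ 2 ≤ D ^ 2 / (2 * (2 + 2 * ρ) * t) := by
  exact comonotone_continuous_time_last_iterate_general hρ₁ (hF.differentiable one_ne_zero) hcomono
    hzstar hdist hu0 (hzC1.differentiableOn one_ne_zero) hdyn1 hdyn2 hdyn3
end
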